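/- For d ≥ 2 and p > p_c(d), the entropy functional I is not lower semicontinuous on M_1(Ω_0 × U_d) with respect to the weak topology; consequently I ≠ I**. -/

import Mathlib

open MeasureTheory ProbabilityTheory Filter Topology
open scoped ENNReal NNReal BigOperators

noncomputable section

namespace SRWPC

/-- Vertices of the lattice `ℤ^d`. -/
abbrev V (d : ℕ) := Fin d → ℤ

/-- Index of a nearest-neighbour bond: the bond from `x` to `x + eᵢ`. -/
abbrev EdgeIx (d : ℕ) := V d × Fin d

/-- Percolation configurations `Ω = {0,1}^{𝔹_d}`. -/
abbrev Config (d : ℕ) := EdgeIx d → Bool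

/-- The `i`-th coordinate unit vector. -/
def unitVec (d : ℕ) (i : Fin d) : V d := fun j => if j = i then 1 else 0

/-- The set `𝕌_d` of the `2d` unit vectors. -/
def Ud (d : ℕ) : Finset (V d) :=
  (Finset.univ.image (unitVec d)) ∪ (Finset.univ.image (fun i => -unitVec d i))

/-- The type of nearest-neighbour steps (elements of `𝕌_d`). -/
abbrev Step (d : ℕ) := {e : V d // e ∈ Ud d}

/-- The shift `(τ_x ω)_b = ω_{x+b}`. -/
def shift {d : ℕ} (x : V d) (ω : Config d) : Config d := fun b => ω (b.1 + x, b.2)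

/-- The bond from `x` to `x + e` is open in `ω`. -/
def edgeOpen {d : ℕ} (ω : Config d) (x e : V d) : Prop :=
  ∃ i : Fin d, (e = unitVec d i ∧ ω (x, i) = true) ∨
    (e = -unitVec d i ∧ ω (x - unitVec d i, i) = true)

open Classical in
/-- The number of open bonds incident to `x`. -/
def openDeg {d : ℕ} (ω : Config d) (x : V d) : ℕ :=
  ((Ud d).filter (fun e => edgeOpen ω x e)).card

open Classical in
/-- The transition probability `π_ω(x,e)` of the simple random walk on the cluster. -/
def trans {d : ℕ} (ω : Config d) (x e : V d) : ℝ :=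
  if edgeOpen ω x e then 1 / openDeg ω x else 0

/-- `γ` restricted to `{0,…,n}` is a nearest-neighbour open path in `ω`. -/
def IsOpenPath {d : ℕ} (ω : Config d) (γ : ℕ → V d) (n : ℕ) : Prop :=
  ∀ k < n, (γ (k + 1) - γ k) ∈ Ud d ∧ edgeOpen ω (γ k) (γ (k + 1) - γ k)

/-- `x` lies in the box `[-r,r]^d`. -/
def inBox {d : ℕ} (x : V d) (r : ℝ) : Prop := ∀ i, |(x i : ℝ)| ≤ r

/-- `x` is joined to infinity by a nearest-neighbour open path, i.e. `x ∈ 𝒞_∞(ω)`. -/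
def memCluster {d : ℕ} (ω : Config d) (x : V d) : Prop :=
  ∀ R : ℕ, ∃ (γ : ℕ → V d) (n : ℕ), γ 0 = x ∧ IsOpenPath ω γ n ∧ ¬ inBox (γ n) R

/-- The event `Ω_0 = {0 ∈ 𝒞_∞}`. -/
def cluZero (d : ℕ) : Set (Config d) := {ω | memCluster ω 0}

/-- `P` is the Bernoulli bond percolation product measure with parameter `q`. -/
def IsBernoulli (d : ℕ) (q : ℝ) (P : Measure (Config d)) : Prop :=
  IsProbabilityMeasure P ∧
    ∀ (F : Finset (EdgeIx d)) (a : EdgeIx d → Bool),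
      P {ω | ∀ b ∈ F, ω b = a b} = ∏ b ∈ F, ENNReal.ofReal (if a b then q else 1 - q)

/-- The critical probability `p_c(d)` of bond percolation on `ℤ^d`. -/
def pc (d : ℕ) : ℝ :=
  sInf {q : ℝ | q ∈ Set.Icc (0 : ℝ) 1 ∧
    ∀ P : Measure (Config d), IsBernoulli d q P → 0 < P (cluZero d)}

variable {d : ℕ}

/-- Position of the walk after `k` steps, given the sequence of steps `s`. -/
def pos {n : ℕ} (s : Fin n → Step d) (k : ℕ) : V d :=
  ∑ j ∈ Finset.univ.filter (fun j : Fin n => (j : ℕ) < k), (s j).1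

/-- The environment/step pair `(τ_{X_k} ω, X_{k+1} - X_k)` seen at time `k`. -/
def envPair (ω : Config d) {n : ℕ} (s : Fin n → Step d) (k : Fin n) : Config d × Step d :=
  (shift (pos s k) ω, s k)

/-- Quenched probability of a given sequence of `n` steps under the Markov kernel `κ`. -/
def pathProb (κ : Config d → Step d → ℝ) (ω : Config d) {n : ℕ} (s : Fin n → Step d) : ℝ :=
  ∏ k : Fin n, κ (shift (pos s k) ω) (s k)

/-- The SRWPC transition kernel `π`. -/
def srw (d : ℕ) : Config d → Step d → ℝ := fun ω e => trans ω 0 e.1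

/-- Quenched expectation (under `P_0^{κ,ω}`) of a functional of the first `n` steps. -/
def qE (κ : Config d → Step d → ℝ) (ω : Config d) {n : ℕ} (F : (Fin n → Step d) → ℝ) : ℝ :=
  ∑ s : Fin n → Step d, pathProb κ ω s * F s

/-- Quenched probability (under `P_0^{κ,ω}`) of a set of `n`-step trajectories. -/
def qP (κ : Config d → Step d → ℝ) (ω : Config d) {n : ℕ} (A : Set (Fin n → Step d)) : ℝ :=
  ∑ s : Fin n → Step d, A.indicator (fun s' => pathProb κ ω s') s

/-- Quenched probability, `ℝ≥0∞`-valued. -/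
def qPE (κ : Config d → Step d → ℝ) (ω : Config d) {n : ℕ} (A : Set (Fin n → Step d)) : ℝ≥0∞ :=
  ENNReal.ofReal (qP κ ω A)

/-- The environment-step space `Ω_0 × 𝕌_d`. -/
abbrev EnvSp (d : ℕ) := Config d × Step d

/-- The pair empirical measure `ℒ_n` as a measure. -/
def empMeas (ω : Config d) {n : ℕ} (s : Fin n → Step d) : Measure (EnvSp d) :=
  (n : ℝ≥0∞)⁻¹ • ∑ k : Fin n, Measure.dirac (envPair ω s k)

lemma empMeas_isProb (ω : Config d) {n : ℕ} (hn : n ≠ 0) (s : Fin n → Step d) :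
    IsProbabilityMeasure (empMeas ω s) := by
  constructor
  simp only [empMeas, Measure.smul_apply, Measure.coe_finset_sum, Finset.sum_apply,
    Measure.dirac_apply_of_mem (Set.mem_univ _), smul_eq_mul]
  rw [Finset.sum_const, Finset.card_univ, Fintype.card_fin, nsmul_eq_mul, mul_one,
    ENNReal.inv_mul_cancel]
  · exact_mod_cast hn
  · exact ENNReal.natCast_ne_top n

/-- The pair empirical measure `ℒ_{n+1}` as a probability measure. -/
def empPM (ω : Config d) {n : ℕ} (s : Fin (n + 1) → Step d) : ProbabilityMeasure (EnvSp d) :=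
  ⟨empMeas ω s, empMeas_isProb ω (Nat.succ_ne_zero n) s⟩

/-- First marginal `(μ)_1` of a measure on `Ω_0 × 𝕌_d`. -/
def marg1 (μ : Measure (EnvSp d)) : Measure (Config d) := μ.map Prod.fst

/-- Second marginal `(μ)_2` of a measure on `Ω_0 × 𝕌_d`. -/
def marg2 (μ : Measure (EnvSp d)) : Measure (Config d) := μ.map (fun q => shift q.2.1 q.1)

/-- The slice `dμ(·, e)` of a measure on `Ω_0 × 𝕌_d` at a fixed step `e`. -/
def slice (μ : Measure (EnvSp d)) (e : Step d) : Measure (Config d) :=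
  (μ.restrict (Set.univ ×ˢ {e})).map Prod.fst

/-- The space `ℳ_1⋆`: probability measures on `Ω_0 × 𝕌_d` whose two marginals coincide and
are absolutely continuous w.r.t. `P₀`, and whose densities `dμ(ω,e)/d(μ)_1(ω)` are positive
precisely on open edges, `P₀`-a.s. -/
def M1star (d : ℕ) (P₀ : Measure (Config d)) : Set (ProbabilityMeasure (EnvSp d)) :=
  {μ | marg1 μ.toMeasure = marg2 μ.toMeasure ∧ marg1 μ.toMeasure ≪ P₀ ∧
    ∃ ρ : Step d → Config d → ℝ≥0∞, (∀ e, Measurable (ρ e)) ∧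
      (∀ e, slice μ.toMeasure e = (marg1 μ.toMeasure).withDensity (ρ e)) ∧
      (∀ e : Step d, ∀ᵐ ω ∂P₀, (0 < ρ e ω ↔ edgeOpen ω 0 e.1))}

/-- The reference measure `π_ω(0,e) d(μ)_1(ω)` on `Ω_0 × 𝕌_d`. -/
def refM (μ : Measure (EnvSp d)) : Measure (EnvSp d) :=
  Measure.sum (fun e : Step d =>
    ((marg1 μ).withDensity (fun ω => ENNReal.ofReal (trans ω 0 e.1))).map (fun ω => (ω, e)))

/-- `x log x - x + 1`. -/
def klFun (x : ℝ) : ℝ := x * Real.log x - x + 1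

open Classical in
/-- The entropy functional `ℑ` (a relative entropy with respect to `refM μ`;
it equals `∫ Σ_e dμ(ω,e) log[dμ(ω,e) / (d(μ)_1(ω) π_ω(0,e))]` on `ℳ_1⋆` and `∞` otherwise). -/
def entI (P₀ : Measure (Config d)) (μ : ProbabilityMeasure (EnvSp d)) : ℝ≥0∞ :=
  if μ ∈ M1star d P₀ ∧ μ.toMeasure ≪ refM μ.toMeasure then
    ∫⁻ q, ENNReal.ofReal (klFun ((μ.toMeasure.rnDeriv (refM μ.toMeasure)) q).toReal)
      ∂(refM μ.toMeasure)
  else ∞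

/-- The pairing `⟨f, μ⟩`. -/
def pairing (f : EnvSp d → ℝ) (μ : ProbabilityMeasure (EnvSp d)) : ℝ :=
  ∫ q, f q ∂μ.toMeasure

/-- The Fenchel–Legendre transform `ℑ⋆` of `ℑ`. -/
def entIstar (P₀ : Measure (Config d)) (f : BoundedContinuousFunction (EnvSp d) ℝ) : EReal :=
  ⨆ μ : ProbabilityMeasure (EnvSp d),
    ((pairing f μ : ℝ) : EReal) - ((entI P₀ μ : ℝ≥0∞) : EReal)

/-- The double Fenchel–Legendre transform `ℑ⋆⋆` of `ℑ`. -/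
def entIbis (P₀ : Measure (Config d)) (μ : ProbabilityMeasure (EnvSp d)) : EReal :=
  ⨆ f : BoundedContinuousFunction (EnvSp d) ℝ,
    ((pairing f μ : ℝ) : EReal) - entIstar P₀ f

/-- The contraction map `ξ(μ) = ∫ Σ_e e dμ(ω,e)`. -/
def xi (μ : ProbabilityMeasure (EnvSp d)) : Fin d → ℝ :=
  fun i => ∫ q, ((q.2.1 i : ℤ) : ℝ) ∂μ.toMeasure

/-- The mean velocity `X_n / n` of a trajectory. -/
def meanVel {n : ℕ} (s : Fin n → Step d) : Fin d → ℝ :=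
  fun i => (n : ℝ)⁻¹ * ((pos s n) i : ℝ)

/-- The class `Π̃` of environment transition kernels. -/
def PiT (d : ℕ) (P₀ : Measure (Config d)) : Set (Config d → Step d → ℝ) :=
  {κ | (∀ e : Step d, Measurable (fun ω => κ ω e)) ∧
    (∀ ω e, 0 ≤ κ ω e) ∧ (∀ e : Step d, ∀ᵐ ω ∂P₀, κ ω e ≤ 1) ∧
    (∀ᵐ ω ∂P₀, ∑ e : Step d, κ ω e = 1) ∧
    (∀ e : Step d, ∀ᵐ ω ∂P₀, (κ ω e = 0 ↔ trans ω 0 e.1 = 0))}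

/-- `φ dP₀` is an invariant probability density for the kernel `κ`. -/
def IsInvDensity (P₀ : Measure (Config d)) (κ : Config d → Step d → ℝ)
    (φ : Config d → ℝ) : Prop :=
  Measurable φ ∧ (∀ ω, 0 ≤ φ ω) ∧ (∫ ω, φ ω ∂P₀) = 1 ∧
    (∀ᵐ ω ∂P₀, φ ω = ∑ e : Step d, κ (shift (-e.1) ω) e * φ (shift (-e.1) ω))

/-- The set `ℰ` of pairs `(π̃, φ)`. -/
def Epairs (d : ℕ) (P₀ : Measure (Config d)) :
    Set ((Config d → Step d → ℝ) × (Config d → ℝ)) :=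
  {q | q.1 ∈ PiT d P₀ ∧ IsInvDensity P₀ q.1 q.2}

/-- The measure `dμ(ω,e) = π̃(ω,e) φ(ω) dP₀(ω)` associated with a pair `(π̃, φ)`. -/
def pairMeasure (P₀ : Measure (Config d)) (κ : Config d → Step d → ℝ)
    (φ : Config d → ℝ) : Measure (EnvSp d) :=
  Measure.sum (fun e : Step d =>
    (P₀.withDensity (fun ω => ENNReal.ofReal (κ ω e * φ ω))).map (fun ω => (ω, e)))

/-- The kernel `dμ/d(μ)_1` associated with a measure on `Ω_0 × 𝕌_d`. -/
def toKappa (μ : Measure (EnvSp d)) : Config d → Step d → ℝ :=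
  fun ω e => ((slice μ e).rnDeriv (marg1 μ) ω).toReal

/-- The density `d(μ)_1/dP₀` associated with a measure on `Ω_0 × 𝕌_d`. -/
def toPhi (P₀ : Measure (Config d)) (μ : Measure (EnvSp d)) : Config d → ℝ :=
  fun ω => ((marg1 μ).rnDeriv P₀ ω).toReal

/-- The environment Markov transition operator `R_κ`. -/
def kernelStep (κ : Config d → Step d → ℝ) (f : Config d → ℝ) : Config d → ℝ :=
  fun ω => ∑ e : Step d, κ ω e * f (shift e.1 ω)

/-- `Q` is an invariant measure for the environment kernel `R_κ`. -/
def IsInvariant (κ : Config d → Step d → ℝ) (Q : Measure (Config d)) : Prop :=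
  ∀ f : Config d → ℝ, Measurable f → (∃ C, ∀ ω, |f ω| ≤ C) →
    ∫ ω, kernelStep κ f ω ∂Q = ∫ ω, f ω ∂Q

/-- Partial sum `Σ_{k<m} f(τ_{X_k}ω, X_{k+1}-X_k)` along a trajectory of length `N`. -/
def partialSumF (f : EnvSp d → ℝ) (ω : Config d) {N : ℕ} (s : Fin N → Step d) (m : ℕ) : ℝ :=
  ∑ k ∈ Finset.univ.filter (fun k : Fin N => (k : ℕ) < m), f (envPair ω s k)

/-- The sum of `G` along the path `γ` up to time `n`. -/
def pathSum (G : Config d → V d → ℝ) (ω : Config d) (γ : ℕ → V d) (n : ℕ) : ℝ :=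
  ∑ k ∈ Finset.range n, G (shift (γ k) ω) (γ (k + 1) - γ k)

/-- The class `𝒢_∞` of gradients: zero mean, uniformly bounded, closed loops. -/
def Ginfty (d : ℕ) (P₀ : Measure (Config d)) : Set (Config d → V d → ℝ) :=
  {G | (∀ e ∈ Ud d, Measurable (fun ω => G ω e)) ∧
    (∀ e ∈ Ud d, ∫ ω, G ω e ∂P₀ = 0) ∧
    (∃ M : ℝ, ∀ e ∈ Ud d, ∀ᵐ ω ∂P₀, |G ω e| ≤ M) ∧
    (∀ᵐ ω ∂P₀, ∀ (γ : ℕ → V d) (n : ℕ),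
      memCluster ω (γ 0) → IsOpenPath ω γ n → γ n = γ 0 → pathSum G ω γ n = 0)}

open Classical in
/-- The corrector `Ψ(ω,x)`: the sum of `G` along some open path from `0` to `x`. -/
def corr (G : Config d → V d → ℝ) (ω : Config d) (x : V d) : ℝ :=
  if h : ∃ q : (ℕ → V d) × ℕ, q.1 0 = 0 ∧ q.1 q.2 = x ∧ IsOpenPath ω q.1 q.2
  then pathSum G ω h.choose.1 h.choose.2 else 0

/-- The chemical distance: minimal length of an open path joining `x` and `y`. -/
def chemDist (ω : Config d) (x y : V d) : ℕ :=
  sInf {n : ℕ | ∃ γ : ℕ → V d, γ 0 = x ∧ γ n = y ∧ IsOpenPath ω γ n}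

open Classical in
/-- The functional `Λ(f,G)`. -/
def Lam (P₀ : Measure (Config d)) (f : EnvSp d → ℝ) (G : Config d → V d → ℝ) : EReal :=
  essSup (fun ω => ((Real.log (∑ e : Step d,
    if edgeOpen ω 0 e.1 then trans ω 0 e.1 * Real.exp (f (ω, e) + G ω e.1) else 0)) : EReal)) P₀

/-- The variational formula `H̄(f) = sup_{μ ∈ ℳ_1⋆} {⟨f,μ⟩ - ℑ(μ)}`. -/
def Hbar (P₀ : Measure (Config d)) (f : EnvSp d → ℝ) : EReal :=
  ⨆ μ ∈ M1star d P₀, ((pairing f μ : ℝ) : EReal) - ((entI P₀ μ : ℝ≥0∞) : EReal)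

/-- The finite σ-algebra `𝓑_k` recording all bonds in the box of size `k` around the origin. -/
def Bsig (d k : ℕ) : MeasurableSpace (Config d) :=
  MeasurableSpace.comap
    (fun (ω : Config d) (b : {b : EdgeIx d // ∀ i, |b.1 i| ≤ (k : ℤ)}) => ω b.1) inferInstance

end SRWPC
namespace SRWPC

section Aux

variable {d : ℕ}

/-- The event that the bond from the origin in direction `e` is open. -/
def opn (e : V d) : Set (Config d) := {ω | edgeOpen ω 0 e}

lemma isOpen_edgeOpen (x e : V d) : IsOpen {ω : Config d | edgeOpen ω x e} := by
  have hc : ∀ b : EdgeIx d, IsOpen {ω : Config d | ω b = true} := fun b =>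
    (isOpen_discrete ({true} : Set Bool)).preimage
      (continuous_apply b : Continuous fun ω : Config d => ω b)
  have : {ω : Config d | edgeOpen ω x e} =
      ⋃ i : Fin d, ({ω | e = unitVec d i} ∩ {ω | ω (x, i) = true}) ∪
        ({ω | e = -unitVec d i} ∩ {ω | ω (x - unitVec d i, i) = true}) := by
    ext ω
    simp [edgeOpen]
  rw [this]
  exact isOpen_iUnion fun i => ((isOpen_const).inter (hc _)).union ((isOpen_const).inter (hc _))

lemma measurableSet_opn (e : V d) : MeasurableSet (opn e) :=
  (isOpen_edgeOpen 0 e).measurableSet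

lemma measurableSet_cluZero : MeasurableSet (cluZero d) := by
  have : cluZero d = ⋂ R : ℕ, {ω | ∃ (γ : ℕ → V d) (n : ℕ), γ 0 = 0 ∧ IsOpenPath ω γ n ∧
      ¬ inBox (γ n) R} := by
    ext ω
    simp [cluZero, memCluster]
  rw [this]
  refine MeasurableSet.iInter fun R => IsOpen.measurableSet ?_
  simp only [Set.ofPred_exists, Set.ofPred_and]
  refine isOpen_iUnion fun γ => isOpen_iUnion fun n => isOpen_const.inter (IsOpen.inter ?_
    isOpen_const)
  have : {ω : Config d | IsOpenPath ω γ n} = ⋂ k ∈ Finset.range n,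
      ({ω | (γ (k + 1) - γ k) ∈ Ud d} ∩ {ω | edgeOpen ω (γ k) (γ (k + 1) - γ k)}) := by
    ext ω
    simp [IsOpenPath]
  rw [this]
  exact isOpen_biInter_finset fun k _ => isOpen_const.inter (isOpen_edgeOpen _ _)

lemma edgeOpen_mono {ω ω' : Config d} (h : ∀ b, ω b = true → ω' b = true) {x e : V d}
    (ho : edgeOpen ω x e) : edgeOpen ω' x e := by
  obtain ⟨i, hi⟩ := ho
  exact ⟨i, hi.imp (fun h1 => ⟨h1.1, h _ h1.2⟩) (fun h1 => ⟨h1.1, h _ h1.2⟩)⟩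

lemma cluZero_mono {ω ω' : Config d} (h : ∀ b, ω b = true → ω' b = true)
    (hc : ω ∈ cluZero d) : ω' ∈ cluZero d := by
  intro R
  obtain ⟨γ, n, h0, hp, hb⟩ := hc R
  exact ⟨γ, n, h0, fun k hk => ⟨(hp k hk).1, edgeOpen_mono h (hp k hk).2⟩, hb⟩

lemma mem_Ud {e : V d} : e ∈ Ud d ↔ ∃ i, e = unitVec d i ∨ e = -unitVec d i := by
  simp only [Ud, Finset.mem_union, Finset.mem_image, Finset.mem_univ, true_and]
  constructor
  · rintro (⟨i, h⟩ | ⟨i, h⟩)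
    · exact ⟨i, Or.inl h.symm⟩
    · exact ⟨i, Or.inr h.symm⟩
  · rintro ⟨i, h | h⟩
    · exact Or.inl ⟨i, h.symm⟩
    · exact Or.inr ⟨i, h.symm⟩

lemma neg_mem_Ud {e : V d} (h : e ∈ Ud d) : -e ∈ Ud d := by
  rw [mem_Ud] at *
  obtain ⟨i, h | h⟩ := h
  · exact ⟨i, Or.inr (by rw [h])⟩
  · exact ⟨i, Or.inl (by rw [h, neg_neg])⟩

lemma abs_le_one_of_mem {e : V d} (h : e ∈ Ud d) (j : Fin d) : |((e j : ℤ) : ℝ)| ≤ 1 := by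
  rw [mem_Ud] at h
  obtain ⟨i, h | h⟩ := h <;> subst h <;> by_cases hj : j = i <;> simp [unitVec, hj]

lemma edgeOpen_shift (ω : Config d) (x y e : V d) :
    edgeOpen (shift y ω) x e ↔ edgeOpen ω (x + y) e := by
  simp only [edgeOpen, shift, sub_add_eq_add_sub]

lemma edgeOpen_rev (ω : Config d) (x e : V d) (h : edgeOpen ω x e) :
    edgeOpen ω (x + e) (-e) := by
  obtain ⟨i, h | h⟩ := h
  · refine ⟨i, Or.inr ⟨by rw [h.1], ?_⟩⟩
    rw [h.1, add_sub_cancel_right]; exact h.2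
  · refine ⟨i, Or.inl ⟨by rw [h.1, neg_neg], ?_⟩⟩
    rw [h.1, ← sub_eq_add_neg]; exact h.2

lemma shift_shift_neg (e : V d) (ω : Config d) : shift (-e) (shift e ω) = ω := by
  funext b
  simp [shift]

lemma opn_shift {ω : Config d} {e : V d} (h : ω ∈ opn e) : shift e ω ∈ opn (-e) := by
  show edgeOpen _ _ _
  rw [edgeOpen_shift]
  exact edgeOpen_rev ω 0 e h

lemma cluZero_shift {ω : Config d} {e : V d} (he : e ∈ Ud d) (hc : ω ∈ cluZero d)
    (h : ω ∈ opn e) : shift e ω ∈ cluZero d := by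
  intro R
  obtain ⟨γ, n, h0, hp, hb⟩ := hc (R + 1)
  refine ⟨fun k => Nat.casesOn k 0 (fun k => γ k - e), n + 1, rfl, ?_, ?_⟩
  · intro k hk
    cases k with
    | zero =>
      have : γ 0 - e - 0 = -e := by rw [h0]; simp
      show γ 0 - e - 0 ∈ Ud d ∧ edgeOpen (shift e ω) 0 (γ 0 - e - 0)
      rw [this]
      exact ⟨neg_mem_Ud he, opn_shift h⟩
    | succ k =>
      have := hp k (by omega)
      simp only [sub_sub_sub_cancel_right]
      refine ⟨this.1, ?_⟩
      rw [edgeOpen_shift, sub_add_cancel]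
      exact this.2
  · intro hbox
    apply hb
    intro i
    have h1 := hbox i
    have h2 := abs_le_one_of_mem he i
    simp only [Pi.sub_apply, Int.cast_sub] at h1
    push_cast
    rw [abs_le] at *
    constructor <;> linarith

lemma measurable_shift (x : V d) : Measurable (shift x : Config d → Config d) :=
  measurable_pi_lambda _ fun b => measurable_pi_apply (b.1 + x, b.2)

/-- Cylinder events of all-open bonds determine a finite measure. -/
lemma ext_true {μ ν : Measure (Config d)} [IsFiniteMeasure μ]
    (h : ∀ F : Finset (EdgeIx d), μ {ω | ∀ b ∈ F, ω b = true} = ν {ω | ∀ b ∈ F, ω b = true}) :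
    μ = ν := by
  classical
  refine ext_of_generate_finite
    (Set.range fun F : Finset (EdgeIx d) => {ω : Config d | ∀ b ∈ F, ω b = true}) ?_ ?_ ?_ ?_
  · apply le_antisymm
    · refine iSup_le fun b => ?_
      rw [← measurable_iff_comap_le]
      refine @measurable_to_bool _ (MeasurableSpace.generateFrom _) _ ?_
      refine MeasurableSpace.measurableSet_generateFrom ⟨{b}, ?_⟩
      ext ω
      simp
    · refine MeasurableSpace.generateFrom_le ?_
      rintro _ ⟨F, rfl⟩
      have : {ω : Config d | ∀ b ∈ F, ω b = true} = ⋂ b ∈ F, (fun ω => ω b) ⁻¹' {true} := by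
        ext; simp
      simp only [this]
      exact F.measurableSet_biInter fun b _ => measurable_pi_apply b (MeasurableSet.singleton _)
  · rintro _ ⟨F, rfl⟩ _ ⟨G, rfl⟩ _
    refine ⟨F ∪ G, ?_⟩
    ext ω
    simp only [Finset.mem_union, Set.mem_ofPred_eq, Set.mem_inter_iff]
    constructor
    · intro h; exact ⟨fun b hb => h b (Or.inl hb), fun b hb => h b (Or.inr hb)⟩
    · rintro ⟨h1, h2⟩ b (hb | hb)
      · exact h1 b hb
      · exact h2 b hb
  · rintro _ ⟨F, rfl⟩
    exact h F
  · have := h ∅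
    simpa using this

lemma measurableSet_cyl (F : Finset (EdgeIx d)) :
    MeasurableSet {ω : Config d | ∀ b ∈ F, ω b = true} := by
  have : {ω : Config d | ∀ b ∈ F, ω b = true} = ⋂ b ∈ F, (fun ω => ω b) ⁻¹' {true} := by
    ext; simp
  rw [this]
  exact F.measurableSet_biInter fun b _ => measurable_pi_apply b (MeasurableSet.singleton _)

lemma IsBernoulli.cyl {q : ℝ} {P : Measure (Config d)} (hP : IsBernoulli d q P)
    (F : Finset (EdgeIx d)) :
    P {ω | ∀ b ∈ F, ω b = true} = ENNReal.ofReal q ^ F.card := by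
  have := hP.2 F (fun _ => true)
  simpa using this

lemma exists_bernoulli (q : ℝ) (h0 : 0 ≤ q) (h1 : q ≤ 1) :
    ∃ P : Measure (Config d), IsBernoulli d q P := by
  let m : Measure Bool := ENNReal.ofReal q • Measure.dirac true +
    ENNReal.ofReal (1 - q) • Measure.dirac false
  have hm : IsProbabilityMeasure m := by
    constructor
    simp only [m, Measure.add_apply, Measure.smul_apply, measure_univ, smul_eq_mul, mul_one]
    rw [← ENNReal.ofReal_add h0 (by linarith)]
    simp
  refine ⟨Measure.infinitePi (fun _ => m), inferInstance, fun F a => ?_⟩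
  have := Measure.infinitePi_pi (μ := fun _ : EdgeIx d => m) (s := F) (t := fun b => {a b})
    (fun _ _ => MeasurableSet.singleton _)
  have hs : {ω : Config d | ∀ b ∈ F, ω b = a b} = Set.pi F (fun b => {a b}) := by
    ext ω; simp [Set.mem_pi]
  rw [hs, this]
  refine Finset.prod_congr rfl fun b _ => ?_
  cases h : a b <;> simp [m]

lemma isBernoulli_of_cyl {q : ℝ} (h0 : 0 ≤ q) (h1 : q ≤ 1) {P : Measure (Config d)}
    (h : ∀ F : Finset (EdgeIx d), P {ω | ∀ b ∈ F, ω b = true} = ENNReal.ofReal q ^ F.card) :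
    IsBernoulli d q P := by
  obtain ⟨P', hP'⟩ := exists_bernoulli (d := d) q h0 h1
  have := hP'.1
  have : P' = P := ext_true fun F => by rw [h, hP'.cyl]
  exact this ▸ hP'

lemma map_shift_eq {q : ℝ} {P : Measure (Config d)} (hP : IsBernoulli d q P) (x : V d) :
    P.map (shift x) = P := by
  classical
  have := hP.1
  have : IsProbabilityMeasure (P.map (shift x)) :=
    Measure.isProbabilityMeasure_map (measurable_shift x).aemeasurable
  refine ext_true fun F => ?_
  rw [Measure.map_apply (measurable_shift x) (measurableSet_cyl F), hP.cyl]
  have hinj : Function.Injective (fun b : EdgeIx d => ((b.1 + x, b.2) : EdgeIx d)) := by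
    rintro ⟨a, i⟩ ⟨b, j⟩ h
    simpa using h
  have := hP.cyl (F.image (fun b : EdgeIx d => ((b.1 + x, b.2) : EdgeIx d)))
  rw [Finset.card_image_of_injective _ hinj] at this
  rw [← this]
  congr 1
  ext ω
  simp only [Set.mem_preimage, Set.mem_ofPred_eq, Finset.forall_mem_image, shift]

/-- Insertion tolerance. -/
lemma insertion {q : ℝ} (hq : 0 < q) {P : Measure (Config d)} (hP : IsBernoulli d q P)
    (b : EdgeIx d) {A : Set (Config d)} (hA : MeasurableSet A)
    (hup : ∀ ω ∈ A, Function.update ω b true ∈ A) (hpos : 0 < P A) :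
    0 < P (A ∩ {ω | ω b = true}) := by
  classical
  have := hP.1
  have hmu : Measurable (fun ω : Config d => Function.update ω b true) :=
    measurable_pi_lambda _ fun c => by
      by_cases hc : c = b
      · subst hc; simp
      · simp only [Function.update_of_ne hc]; exact measurable_pi_apply c
  have hms : MeasurableSet {ω : Config d | ω b = true} := by
    simpa using measurableSet_cyl {b}
  have key : ENNReal.ofReal q • P.map (fun ω => Function.update ω b true) =
      P.restrict {ω | ω b = true} := by
    have : IsFiniteMeasure (ENNReal.ofReal q • P.map (fun ω => Function.update ω b true)) :=
      Measure.smul_finite _ ENNReal.ofReal_ne_top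
    refine ext_true fun F => ?_
    rw [Measure.smul_apply, Measure.map_apply hmu (measurableSet_cyl F),
      Measure.restrict_apply (measurableSet_cyl F)]
    have e1 : (fun ω : Config d => Function.update ω b true) ⁻¹' {ω | ∀ c ∈ F, ω c = true} =
        {ω | ∀ c ∈ F.erase b, ω c = true} := by
      ext ω
      simp only [Set.mem_preimage, Set.mem_ofPred_eq, Finset.mem_erase]
      refine forall_congr' fun c => ?_
      by_cases hc : c = b
      · subst hc; simp
      · simp [hc]
    have e2 : {ω : Config d | ∀ c ∈ F, ω c = true} ∩ {ω | ω b = true} =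
        {ω | ∀ c ∈ insert b (F.erase b), ω c = true} := by
      ext ω
      simp only [Set.mem_inter_iff, Set.mem_ofPred_eq, Finset.mem_insert,
        Finset.mem_erase]
      constructor
      · rintro ⟨h1, h2⟩ c (rfl | hc)
        · exact h2
        · exact h1 c hc.2
      · intro h
        refine ⟨fun c hc => ?_, h b (Or.inl rfl)⟩
        by_cases hcb : c = b
        · exact h c (Or.inl hcb)
        · exact h c (Or.inr ⟨hcb, hc⟩)
    rw [e1, e2, hP.cyl, hP.cyl, Finset.card_insert_of_notMem (Finset.notMem_erase b F), pow_succ',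
      smul_eq_mul]
  rw [← Measure.restrict_apply hA, ← key, Measure.smul_apply, Measure.map_apply hmu hA,
    smul_eq_mul]
  refine ENNReal.mul_pos (by simpa using hq) ?_
  exact (hpos.trans_le (measure_mono hup)).ne'

lemma cluZero_all_true (hd : 2 ≤ d) {ω : Config d} (h : ∀ b, ω b = true) : ω ∈ cluZero d := by
  intro R
  let i : Fin d := ⟨0, by omega⟩
  refine ⟨fun k => k • unitVec d i, R + 1, by simp, ?_, ?_⟩
  · intro k _
    have : (k + 1) • unitVec d i - k • unitVec d i = unitVec d i := by
      rw [add_smul, one_smul, add_sub_cancel_left]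
    simp only [this]
    exact ⟨mem_Ud.2 ⟨i, Or.inl rfl⟩, i, Or.inl ⟨rfl, h _⟩⟩
  · intro hb
    have := hb i
    simp [unitVec] at this
    rw [abs_le] at this
    linarith [this.2]

lemma cluZero_pos (hd : 2 ≤ d) {p : ℝ} (hp0 : 0 < p) (hpc : pc d < p)
    {P : Measure (Config d)} (hP : IsBernoulli d p P) : 0 < P (cluZero d) := by
  have := hP.1
  have hne : {q : ℝ | q ∈ Set.Icc (0 : ℝ) 1 ∧
      ∀ P : Measure (Config d), IsBernoulli d q P → 0 < P (cluZero d)}.Nonempty := by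
    refine ⟨1, by simp, fun P hP => ?_⟩
    have := hP.1
    have h1 : ∀ᵐ ω ∂P, ∀ b, ω b = true := by
      rw [ae_all_iff]
      intro b
      have hc := hP.cyl {b}
      have hm := measurableSet_cyl {b}
      simp only [Finset.mem_singleton, forall_eq, ENNReal.ofReal_one, one_pow] at hc hm
      rw [← mem_ae_iff_prob_eq_one hm] at hc
      exact hc
    have h2 : ∀ᵐ ω ∂P, ω ∈ cluZero d := h1.mono fun ω h => cluZero_all_true hd h
    have := (mem_ae_iff_prob_eq_one measurableSet_cluZero).1 h2
    rw [this]; exact zero_lt_one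
  obtain ⟨q, ⟨⟨hq0, hq1⟩, hq⟩, hqp⟩ := exists_lt_of_csInf_lt hne hpc
  obtain ⟨P', hP'⟩ := exists_bernoulli (d := d) (q / p) (by positivity)
    ((div_le_one hp0).2 hqp.le)
  have := hP'.1
  let f : Config d × Config d → Config d := fun z b => z.1 b && z.2 b
  have hf : Measurable f := by
    refine measurable_pi_lambda _ fun b => ?_
    have h1 : Measurable (fun z : Config d × Config d => (z.1 b, z.2 b)) :=
      ((measurable_pi_apply b).comp measurable_fst).prodMk
        ((measurable_pi_apply b).comp measurable_snd)
    exact (measurable_of_countable (fun z : Bool × Bool => z.1 && z.2)).comp h1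
  have hB : IsBernoulli d q ((P.prod P').map f) := by
    refine isBernoulli_of_cyl hq0 hq1 fun F => ?_
    rw [Measure.map_apply hf (measurableSet_cyl F)]
    have : f ⁻¹' {ω | ∀ b ∈ F, ω b = true} =
        {ω | ∀ b ∈ F, ω b = true} ×ˢ {ω | ∀ b ∈ F, ω b = true} := by
      ext ω
      simp [f, forall_and]
    rw [this, Measure.prod_prod, hP.cyl, hP'.cyl, ← mul_pow, ← ENNReal.ofReal_mul hp0.le,
      mul_div_cancel₀ _ hp0.ne']
  have h := hq _ hB
  rw [Measure.map_apply hf measurableSet_cluZero] at h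
  refine h.trans_le ?_
  calc (P.prod P') (f ⁻¹' cluZero d) ≤ (P.prod P') (cluZero d ×ˢ Set.univ) := by
        refine measure_mono fun z hz => ⟨cluZero_mono (fun b hb => ?_) hz, trivial⟩
        simp only [f, Bool.and_eq_true] at hb
        exact hb.1
    _ = P (cluZero d) := by rw [Measure.prod_prod]; simp

end Aux

section Cond

variable {d : ℕ}

/-- The opposite step. -/
def negStep (e : Step d) : Step d := ⟨-e.1, neg_mem_Ud e.2⟩

lemma negStep_negStep (e : Step d) : negStep (negStep e) = e := Subtype.ext (neg_neg _)

/-- The measure with conductances `c` on open bonds. -/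
def condM (Q : Measure (Config d)) (c : Step d → ℝ≥0) : Measure (EnvSp d) :=
  ∑ e : Step d, (c e • Q.restrict (opn e.1)).map (fun ω => (ω, e))

lemma measurable_mk (e : Step d) : Measurable (fun ω : Config d => ((ω, e) : EnvSp d)) :=
  measurable_id.prodMk measurable_const

lemma map_finsum {α β ι : Type*} [MeasurableSpace α] [MeasurableSpace β] (s : Finset ι)
    (m : ι → Measure α) {f : α → β} (hf : Measurable f) :
    (∑ i ∈ s, m i).map f = ∑ i ∈ s, (m i).map f := by
  ext A hA
  simp [Measure.map_apply hf hA, Measure.finsetSum_apply]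

lemma measurable_shift2 : Measurable (fun q : EnvSp d => shift q.2.1 q.1) :=
  measurable_from_prod_countable_left fun e => measurable_shift e.1

lemma marg1_condM (Q : Measure (Config d)) (c : Step d → ℝ≥0) :
    marg1 (condM Q c) = ∑ e : Step d, c e • Q.restrict (opn e.1) := by
  rw [marg1, condM, map_finsum _ _ measurable_fst]
  refine Finset.sum_congr rfl fun e _ => ?_
  rw [Measure.map_map measurable_fst (measurable_mk e)]
  exact Measure.map_id

lemma marg2_condM (Q : Measure (Config d)) (c : Step d → ℝ≥0)
    (hQ : ∀ e : Step d, (Q.restrict (opn e.1)).map (shift e.1) = Q.restrict (opn (-e.1)))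
    (hc : ∀ e, c (negStep e) = c e) :
    marg2 (condM Q c) = marg1 (condM Q c) := by
  rw [marg1_condM, marg2, condM, map_finsum _ _ measurable_shift2]
  have h1 : ∀ e : Step d, ((c e • Q.restrict (opn e.1)).map (fun ω => ((ω, e) : EnvSp d))).map
      (fun q : EnvSp d => shift q.2.1 q.1) = c (negStep e) • Q.restrict (opn (negStep e).1) := by
    intro e
    rw [Measure.map_map measurable_shift2 (measurable_mk e), hc]
    have : (fun q : EnvSp d => shift q.2.1 q.1) ∘ (fun ω => ((ω, e) : EnvSp d)) = shift e.1 := rfl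
    rw [this, Measure.map_smul, hQ e]
    rfl
  rw [Finset.sum_congr rfl fun e _ => h1 e]
  exact Fintype.sum_equiv ⟨negStep, negStep, negStep_negStep, negStep_negStep⟩ _ _ fun e => rfl

lemma slice_condM (Q : Measure (Config d)) (c : Step d → ℝ≥0) (e : Step d) :
    slice (condM Q c) e = c e • Q.restrict (opn e.1) := by
  have hm : MeasurableSet (Set.univ ×ˢ {e} : Set (EnvSp d)) :=
    MeasurableSet.univ.prod (MeasurableSet.singleton e)
  ext A hA
  rw [slice, Measure.map_apply measurable_fst hA, Measure.restrict_apply (measurable_fst hA),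
    condM, Measure.finsetSum_apply]
  have h : ∀ e' : Step d, ((c e' • Q.restrict (opn e'.1)).map (fun ω => ((ω, e') : EnvSp d)))
      (Prod.fst ⁻¹' A ∩ Set.univ ×ˢ {e}) =
      if e' = e then (c e' • Q.restrict (opn e'.1)) A else 0 := by
    intro e'
    rw [Measure.map_apply (measurable_mk e') ((measurable_fst hA).inter hm)]
    split_ifs with h
    · subst h
      congr 1
      ext ω; simp
    · have : (fun ω : Config d => ((ω, e') : EnvSp d)) ⁻¹' (Prod.fst ⁻¹' A ∩ Set.univ ×ˢ {e}) =
          ∅ := by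
        ext ω; simp [h]
      rw [this, measure_empty]
  rw [Finset.sum_congr rfl fun e' _ => h e']
  simp

lemma condM_univ (Q : Measure (Config d)) (c : Step d → ℝ≥0) :
    condM Q c Set.univ = ∑ e : Step d, c e * Q (opn e.1) := by
  rw [condM, Measure.finsetSum_apply]
  refine Finset.sum_congr rfl fun e _ => ?_
  rw [Measure.map_apply (measurable_mk e) MeasurableSet.univ]
  rw [Measure.smul_apply, Set.preimage_univ, Measure.restrict_apply_univ, ENNReal.smul_def,
    smul_eq_mul]

lemma integral_condM (Q : Measure (Config d)) [IsFiniteMeasure Q] (c : Step d → ℝ≥0)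
    (f : BoundedContinuousFunction (EnvSp d) ℝ) :
    ∫ q, f q ∂(condM Q c) = ∑ e : Step d, (c e : ℝ) * ∫ ω in opn e.1, f (ω, e) ∂Q := by
  have hfm : Measurable f := f.continuous.measurable
  rw [condM, integral_finsetSum_measure]
  · refine Finset.sum_congr rfl fun e _ => ?_
    rw [integral_map (measurable_mk e).aemeasurable hfm.aestronglyMeasurable,
      integral_smul_nnreal_measure]
    rfl
  · intro e _
    exact f.integrable _

lemma openDeg_pos {ω : Config d} {e : Step d} (h : ω ∈ opn e.1) : 0 < openDeg ω 0 := by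
  classical
  unfold openDeg
  exact Finset.card_pos.2 ⟨e.1, Finset.mem_filter.2 ⟨e.2, h⟩⟩

lemma openDeg_le (ω : Config d) : openDeg ω 0 ≤ (Ud d).card := by
  classical
  unfold openDeg
  exact Finset.card_filter_le _ _

lemma trans_nonneg (ω : Config d) (e : V d) : 0 ≤ trans ω 0 e := by
  unfold trans; split_ifs <;> positivity

lemma trans_le_one (ω : Config d) (e : V d) : trans ω 0 e ≤ 1 := by
  unfold trans
  split_ifs
  · rcases Nat.eq_zero_or_pos (openDeg ω 0) with h | h
    · simp [h]
    · rw [div_le_one (by exact_mod_cast h)]; exact_mod_cast h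
  · exact zero_le_one

lemma one_le_card_mul_trans {ω : Config d} {e : Step d} (h : ω ∈ opn e.1) :
    1 ≤ ((Ud d).card : ℝ≥0∞) * ENNReal.ofReal (trans ω 0 e.1) := by
  have h1 := openDeg_pos h
  have h2 := openDeg_le ω
  rw [← ENNReal.ofReal_natCast, ← ENNReal.ofReal_mul (by positivity), ENNReal.one_le_ofReal]
  have : trans ω 0 e.1 = 1 / openDeg ω 0 := by unfold trans; exact if_pos h
  rw [this, mul_one_div, le_div_iff₀ (by exact_mod_cast h1), one_mul]
  exact_mod_cast h2

lemma condM_le (Q : Measure (Config d)) (c : Step d → ℝ≥0) :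
    condM Q c ≤ ((Ud d).card : ℝ≥0∞) • refM (condM Q c) := by
  rw [Measure.le_iff]
  intro A hA
  rw [Measure.smul_apply, refM, Measure.sum_apply _ hA, tsum_fintype, smul_eq_mul, Finset.mul_sum]
  conv_lhs => rw [condM, Measure.finsetSum_apply]
  refine Finset.sum_le_sum fun e _ => ?_
  have hB : MeasurableSet ((fun ω : Config d => ((ω, e) : EnvSp d)) ⁻¹' A) := measurable_mk e hA
  rw [Measure.map_apply (measurable_mk e) hA, Measure.map_apply (measurable_mk e) hA]
  set B := (fun ω : Config d => ((ω, e) : EnvSp d)) ⁻¹' A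
  have hBo : MeasurableSet (B ∩ opn e.1) := hB.inter (measurableSet_opn e.1)
  calc (c e • Q.restrict (opn e.1)) B = (c e • Q.restrict (opn e.1)) (B ∩ opn e.1) := by
        simp only [Measure.smul_apply]
        rw [Measure.restrict_apply hB, Measure.restrict_apply hBo, Set.inter_assoc, Set.inter_self]
    _ ≤ marg1 (condM Q c) (B ∩ opn e.1) := by
        rw [marg1_condM, Measure.finsetSum_apply]
        exact Finset.single_le_sum
          (f := fun e' : Step d => (c e' • Q.restrict (opn e'.1)) (B ∩ opn e.1))
          (fun _ _ => zero_le) (Finset.mem_univ e)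
    _ = ∫⁻ ω in B ∩ opn e.1, 1 ∂(marg1 (condM Q c)) := by simp
    _ ≤ ∫⁻ ω in B ∩ opn e.1, ((Ud d).card : ℝ≥0∞) * ENNReal.ofReal (trans ω 0 e.1)
          ∂(marg1 (condM Q c)) :=
        setLIntegral_mono' hBo fun ω hω => one_le_card_mul_trans hω.2
    _ ≤ ∫⁻ ω in B, ((Ud d).card : ℝ≥0∞) * ENNReal.ofReal (trans ω 0 e.1)
          ∂(marg1 (condM Q c)) := lintegral_mono_set Set.inter_subset_left
    _ = _ := by
        rw [lintegral_const_mul' _ _ (ENNReal.natCast_ne_top _), withDensity_apply _ hB]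

lemma refM_univ_le (μ : Measure (EnvSp d)) [IsProbabilityMeasure μ] :
    refM μ Set.univ ≤ Fintype.card (Step d) := by
  rw [refM, Measure.sum_apply _ MeasurableSet.univ, tsum_fintype]
  calc _ ≤ ∑ _e : Step d, (1 : ℝ≥0∞) := by
        refine Finset.sum_le_sum fun e _ => ?_
        rw [Measure.map_apply (measurable_mk e) MeasurableSet.univ, Set.preimage_univ,
          withDensity_apply _ MeasurableSet.univ]
        calc _ ≤ ∫⁻ ω in Set.univ, 1 ∂(marg1 μ) := by
              refine lintegral_mono fun ω => ?_
              rw [← ENNReal.ofReal_one]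
              exact ENNReal.ofReal_le_ofReal (trans_le_one ω e.1)
          _ = 1 := by
              rw [marg1]
              simp [Measure.map_apply measurable_fst MeasurableSet.univ]
    _ = _ := by simp

lemma klFun_le {x K : ℝ} (h0 : 0 ≤ x) (hK : x ≤ K) : klFun x ≤ K ^ 2 + 1 := by
  unfold klFun
  have h1 : x * Real.log x ≤ x * x := by
    refine mul_le_mul_of_nonneg_left ?_ h0
    exact Real.log_le_self h0
  nlinarith

/-- The bound for the entropy. -/
def entBound (d : ℕ) : ℝ≥0∞ :=
  ENNReal.ofReal (((Ud d).card : ℝ) ^ 2 + 1) * Fintype.card (Step d)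

lemma entBound_lt_top : entBound d < ∞ :=
  ENNReal.mul_lt_top ENNReal.ofReal_lt_top (ENNReal.natCast_lt_top _)

lemma entI_le (P₀ : Measure (Config d)) (μ : ProbabilityMeasure (EnvSp d))
    (hμ : μ ∈ M1star d P₀)
    (hle : μ.toMeasure ≤ ((Ud d).card : ℝ≥0∞) • refM μ.toMeasure) :
    entI P₀ μ ≤ entBound d := by
  have hac : μ.toMeasure ≪ refM μ.toMeasure :=
    (Measure.absolutelyContinuous_of_le hle).trans Measure.smul_absolutelyContinuous
  have hfin : IsFiniteMeasure (refM μ.toMeasure) :=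
    ⟨(refM_univ_le _).trans_lt (ENNReal.natCast_lt_top _)⟩
  rw [entI, if_pos ⟨hμ, hac⟩]
  have hae : μ.toMeasure.rnDeriv (refM μ.toMeasure) ≤ᵐ[refM μ.toMeasure]
      fun _ => ((Ud d).card : ℝ≥0∞) := by
    refine ae_le_of_forall_setLIntegral_le_of_sigmaFinite (Measure.measurable_rnDeriv _ _)
      fun s hs _ => ?_
    refine (Measure.setLIntegral_rnDeriv_le _).trans ?_
    rw [setLIntegral_const]
    exact hle s
  calc _ ≤ ∫⁻ _q, ENNReal.ofReal (((Ud d).card : ℝ) ^ 2 + 1) ∂(refM μ.toMeasure) := by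
        refine lintegral_mono_ae (hae.mono fun q hq => ?_)
        refine ENNReal.ofReal_le_ofReal (klFun_le ENNReal.toReal_nonneg ?_)
        have := ENNReal.toReal_mono (ENNReal.natCast_ne_top _) hq
        simpa using this
    _ ≤ _ := by
        rw [lintegral_const, entBound]
        gcongr
        exact refM_univ_le _

lemma condM_prob {Q : Measure (Config d)} {c : Step d → ℝ≥0}
    (h1 : ∑ e : Step d, (c e : ℝ≥0∞) * Q (opn e.1) = 1) : IsProbabilityMeasure (condM Q c) :=
  ⟨by rw [condM_univ, h1]⟩

/-- `condM` as a probability measure. -/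
def condPM (Q : Measure (Config d)) (c : Step d → ℝ≥0)
    (h1 : ∑ e : Step d, (c e : ℝ≥0∞) * Q (opn e.1) = 1) : ProbabilityMeasure (EnvSp d) :=
  ⟨condM Q c, condM_prob h1⟩

lemma condPM_mem (Q : Measure (Config d)) (c : Step d → ℝ≥0)
    (h1 : ∑ e : Step d, (c e : ℝ≥0∞) * Q (opn e.1) = 1)
    (hQ : ∀ e : Step d, (Q.restrict (opn e.1)).map (shift e.1) = Q.restrict (opn (-e.1)))
    (hc : ∀ e, c (negStep e) = c e) (hpos : ∀ e, 0 < c e) :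
    condPM Q c h1 ∈ M1star d Q := by
  classical
  let g : Step d → Config d → ℝ≥0∞ := fun e => (opn e.1).indicator fun _ => (c e : ℝ≥0∞)
  let φ : Config d → ℝ≥0∞ := fun ω => ∑ e : Step d, g e ω
  have hg : ∀ e, Measurable (g e) := fun e => measurable_const.indicator (measurableSet_opn e.1)
  have hφ : Measurable φ := Finset.measurable_fun_sum _ fun e _ => hg e
  have hgQ : ∀ e, Q.withDensity (g e) = c e • Q.restrict (opn e.1) := by
    intro e
    rw [withDensity_indicator (measurableSet_opn e.1), withDensity_const]
    rfl
  have hM : marg1 (condM Q c) = Q.withDensity φ := by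
    rw [marg1_condM]
    ext A hA
    rw [withDensity_apply _ hA, lintegral_finsetSum _ (fun e _ => hg e),
      Measure.finsetSum_apply]
    refine Finset.sum_congr rfl fun e _ => ?_
    rw [← hgQ, withDensity_apply _ hA]
  have hgtop : ∀ e ω, g e ω ≠ ∞ := by
    intro e ω
    simp only [g, Set.indicator]
    split_ifs <;> simp
  have hφtop : ∀ ω, φ ω ≠ ∞ := fun ω => (ENNReal.sum_lt_top.2 fun e _ => (hgtop e ω).lt_top).ne
  refine ⟨(marg2_condM Q c hQ hc).symm, ?_, fun e ω => g e ω / φ ω, fun e => (hg e).div hφ, ?_, ?_⟩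
  · show marg1 (condM Q c) ≪ Q
    rw [hM]
    exact withDensity_absolutelyContinuous _ _
  · intro e
    show slice (condM Q c) e = (marg1 (condM Q c)).withDensity _
    rw [hM, slice_condM, ← hgQ, ← withDensity_mul Q hφ (g := fun ω => g e ω / φ ω) ((hg e).div hφ)]
    congr 1
    funext ω
    simp only [Pi.mul_apply]
    by_cases h : φ ω = 0
    · have : g e ω = 0 := (Finset.sum_eq_zero_iff.1 h) e (Finset.mem_univ e)
      simp [this]
    · exact (ENNReal.mul_div_cancel h (hφtop ω)).symm
  · intro e
    refine Eventually.of_forall fun ω => ?_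
    rw [ENNReal.div_pos_iff]
    constructor
    · rintro ⟨h, _⟩
      by_contra hn
      exact h (Set.indicator_of_notMem (s := opn e.1) hn _)
    · intro h
      refine ⟨?_, hφtop ω⟩
      have : g e ω = c e := Set.indicator_of_mem (s := opn e.1) h _
      rw [this]
      exact_mod_cast (hpos e).ne'

lemma condPM_notMem (Q : Measure (Config d)) (c : Step d → ℝ≥0)
    (h1 : ∑ e : Step d, (c e : ℝ≥0∞) * Q (opn e.1) = 1) (e₀ e₁ : Step d)
    (h0 : 0 < c e₀) (hz : c e₁ = 0) (hpos : 0 < Q (opn e₀.1 ∩ opn e₁.1)) :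
    condPM Q c h1 ∉ M1star d Q := by
  rintro ⟨-, hac, ρ, hρm, hρ, hρp⟩
  have hs : slice (condM Q c) e₁ = (marg1 (condM Q c)).withDensity (ρ e₁) := hρ e₁
  rw [slice_condM, hz, zero_smul] at hs
  have hz' := (withDensity_eq_zero_iff (hρm e₁).aemeasurable).1 hs.symm
  have hae : ∀ᵐ ω ∂(marg1 (condM Q c)), ω ∉ opn e₁.1 := by
    filter_upwards [hz', hac.ae_le (hρp e₁)] with ω ha hb hc
    have := hb.2 hc
    rw [ha] at this
    exact lt_irrefl _ this
  have hM : marg1 (condM Q c) (opn e₁.1) = 0 := by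
    rw [ae_iff] at hae
    simpa using hae
  rw [marg1_condM, Measure.finsetSum_apply, Finset.sum_eq_zero_iff] at hM
  have := hM e₀ (Finset.mem_univ _)
  rw [Measure.smul_apply, Measure.restrict_apply (measurableSet_opn _), Set.inter_comm] at this
  rw [ENNReal.smul_def, smul_eq_mul, mul_eq_zero] at this
  rcases this with h | h
  · exact h0.ne' (by exact_mod_cast h)
  · exact hpos.ne' h

lemma not_lsc (Q : Measure (Config d)) [IsFiniteMeasure Q]
    (hQ : ∀ e : Step d, (Q.restrict (opn e.1)).map (shift e.1) = Q.restrict (opn (-e.1)))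
    (e₀ e₁ : Step d) (h01 : e₁ ≠ e₀) (h01' : e₁ ≠ negStep e₀)
    (hpos : 0 < Q (opn e₀.1 ∩ opn e₁.1)) :
    ¬ LowerSemicontinuous (fun μ : ProbabilityMeasure (EnvSp d) => entI Q μ) := by
  classical
  have hq : ∀ e : Step d, Q (opn e.1) ≠ ∞ := fun e => measure_ne_top _ _
  let q : Step d → ℝ≥0 := fun e => (Q (opn e.1)).toNNReal
  have hqc : ∀ e : Step d, Q (opn e.1) = q e := fun e => (ENNReal.coe_toNNReal (hq e)).symm
  have hq0 : 0 < q e₀ := by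
    have : 0 < Q (opn e₀.1) := hpos.trans_le (measure_mono Set.inter_subset_left)
    rw [hqc] at this
    exact_mod_cast this
  have hsum : ∀ c : Step d → ℝ≥0, ∑ e, c e * q e = 1 →
      ∑ e : Step d, (c e : ℝ≥0∞) * Q (opn e.1) = 1 := by
    intro c h
    simp only [hqc]
    exact_mod_cast h
  -- normalisation
  have norm : ∀ a : Step d → ℝ≥0, 0 < a e₀ →
      ∃ z : ℝ≥0, 0 < z ∧ ∑ e, (z * a e) * q e = 1 := by
    intro a ha
    have : 0 < ∑ e, a e * q e :=
      (mul_pos ha hq0).trans_le (Finset.single_le_sum (f := fun e => a e * q e)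
        (fun _ _ => zero_le) (Finset.mem_univ e₀))
    refine ⟨(∑ e, a e * q e)⁻¹, inv_pos.2 this, ?_⟩
    simp only [mul_assoc]
    rw [← Finset.mul_sum, inv_mul_cancel₀ this.ne']
  let a₀ : Step d → ℝ≥0 := fun e => if e = e₀ ∨ e = negStep e₀ then 1 else 0
  obtain ⟨z₀, hz₀, hs₀⟩ := norm a₀ (by simp [a₀])
  obtain ⟨z₁, hz₁, hs₁⟩ := norm (fun _ => 1) one_pos
  have ha₀ : ∀ e, a₀ (negStep e) = a₀ e := by
    intro e
    have h1 : negStep e = e₀ ↔ e = negStep e₀ :=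
      ⟨fun h => by rw [← h, negStep_negStep], fun h => by rw [h, negStep_negStep]⟩
    have h2 : negStep e = negStep e₀ ↔ e = e₀ :=
      ⟨fun h => by rw [← negStep_negStep e, h, negStep_negStep], fun h => by rw [h]⟩
    simp only [a₀, h1, h2, or_comm]
  let s : ℕ → ℝ≥0 := fun n => 1 / ((n : ℝ≥0) + 1)
  have hs_pos : ∀ n, 0 < s n := fun n => by positivity
  have hs_le : ∀ n, s n ≤ 1 := fun n => by
    simp only [s]
    rw [div_le_one (by positivity)]
    exact le_add_self
  have hs_lim : Tendsto s atTop (𝓝 0) := tendsto_one_div_add_atTop_nhds_zero_nat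
  let c₀ : Step d → ℝ≥0 := fun e => z₀ * a₀ e
  let c : ℕ → Step d → ℝ≥0 := fun n e => (1 - s n) * c₀ e + s n * (z₁ * 1)
  have hc₀ : ∑ e, c₀ e * q e = 1 := hs₀
  have hc : ∀ n, ∑ e, c n e * q e = 1 := by
    intro n
    simp only [c, add_mul]
    rw [Finset.sum_add_distrib]
    simp only [mul_assoc]
    rw [← Finset.mul_sum, ← Finset.mul_sum]
    simp only [mul_assoc] at hs₁ hc₀
    rw [hs₁, hc₀, mul_one, mul_one, tsub_add_cancel_of_le (hs_le n)]
  let μ₀ := condPM Q c₀ (hsum _ hc₀)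
  let μ : ℕ → ProbabilityMeasure (EnvSp d) := fun n => condPM Q (c n) (hsum _ (hc n))
  have hμ₀ : entI Q μ₀ = ∞ := by
    rw [entI, if_neg]
    rintro ⟨h, -⟩
    refine condPM_notMem Q c₀ (hsum _ hc₀) e₀ e₁ ?_ ?_ hpos h
    · simp [c₀, a₀, hz₀]
    · simp [c₀, a₀, h01, h01']
  have hμ : ∀ n, entI Q (μ n) ≤ entBound d := by
    intro n
    refine entI_le Q (μ n) (condPM_mem Q (c n) _ hQ ?_ ?_) (condM_le Q (c n))
    · intro e
      simp only [c, c₀, ha₀]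
    · intro e
      have : 0 < s n * (z₁ * 1) := mul_pos (hs_pos n) (by simpa using hz₁)
      exact this.trans_le le_add_self
  have hlim : Tendsto μ atTop (𝓝 μ₀) := by
    rw [ProbabilityMeasure.tendsto_iff_forall_integral_tendsto]
    intro f
    show Tendsto (fun n => ∫ q, f q ∂(condM Q (c n))) atTop (𝓝 (∫ q, f q ∂(condM Q c₀)))
    simp only [integral_condM]
    refine tendsto_finsetSum _ fun e _ => Tendsto.mul_const _ ?_
    rw [NNReal.tendsto_coe]
    have h1 : Tendsto (fun n => 1 - s n) atTop (𝓝 (1 - 0)) := tendsto_const_nhds.sub hs_lim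
    have h2 := (h1.mul_const (c₀ e)).add (hs_lim.mul_const (z₁ * 1))
    simpa [c] using h2
  intro hl
  have h1 := hl μ₀ (entBound d) (by show entBound d < entI Q μ₀; rw [hμ₀]; exact entBound_lt_top)
  obtain ⟨n, hn⟩ := (hlim.eventually h1).exists
  exact absurd hn (not_lt.2 (hμ n))

lemma lsc_of_eq (Q : Measure (Config d))
    (h : (fun μ : ProbabilityMeasure (EnvSp d) => ((entI Q μ : ℝ≥0∞) : EReal)) = entIbis Q) :
    LowerSemicontinuous (fun μ : ProbabilityMeasure (EnvSp d) => entI Q μ) := by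
  have hb : LowerSemicontinuous (entIbis (d := d) Q) := by
    refine lowerSemicontinuous_iSup fun f => Continuous.lowerSemicontinuous ?_
    have hcont : Continuous (fun μ : ProbabilityMeasure (EnvSp d) => pairing f μ) := by
      rw [continuous_iff_continuousAt]
      intro μ
      exact (ProbabilityMeasure.tendsto_iff_forall_integral_tendsto.1 tendsto_id) f
    induction hI : entIstar Q f with
    | bot =>
      have : ∀ x : ℝ, (x : EReal) - ⊥ = ⊤ := fun x => EReal.coe_sub_bot x
      simp only [this]
      exact continuous_const
    | top =>
      simp only [EReal.sub_top]
      exact continuous_const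
    | coe r =>
      simp only [← EReal.coe_sub]
      exact continuous_coe_real_ereal.comp (hcont.sub continuous_const)
  rw [← h] at hb
  intro μ y hy
  have := hb μ (y : EReal) (EReal.coe_ennreal_lt_coe_ennreal_iff.2 hy)
  refine this.mono fun ν hν => ?_
  exact EReal.coe_ennreal_lt_coe_ennreal_iff.1 hν

lemma cond_restrict {q : ℝ} {P : Measure (Config d)} (hP : IsBernoulli d q P) (e : Step d) :
    ((P[|cluZero d]).restrict (opn e.1)).map (shift e.1) =
      (P[|cluZero d]).restrict (opn (-e.1)) := by
  ext A hA
  have hm := measurable_shift e.1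
  rw [Measure.map_apply hm hA, Measure.restrict_apply (hm hA), Measure.restrict_apply hA,
    cond_apply measurableSet_cluZero, cond_apply measurableSet_cluZero]
  congr 1
  conv_rhs => rw [← map_shift_eq hP e.1]
  rw [Measure.map_apply hm (measurableSet_cluZero.inter (hA.inter (measurableSet_opn _)))]
  congr 1
  ext ω
  constructor
  · rintro ⟨h1, h2, h3⟩
    exact ⟨cluZero_shift e.2 h1 h3, h2, opn_shift h3⟩
  · rintro ⟨h1, h2, h3⟩
    have h4 := cluZero_shift (neg_mem_Ud e.2) h1 h3
    have h5 := opn_shift h3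
    rw [shift_shift_neg] at h4 h5
    rw [neg_neg] at h5
    exact ⟨h4, h2, h5⟩

lemma cond_pos (hd : 2 ≤ d) {p : ℝ} (hp0 : 0 < p) (hpc : pc d < p)
    {P : Measure (Config d)} (hP : IsBernoulli d p P) (i j : Fin d) :
    0 < (P[|cluZero d]) (opn (unitVec d i) ∩ opn (unitVec d j)) := by
  have := hP.1
  have h0 := cluZero_pos hd hp0 hpc hP
  have hup : ∀ (ω : Config d) b c, ω c = true → Function.update ω b true c = true := by
    intro ω b c h
    by_cases hc : c = b
    · subst hc; simp
    · rw [Function.update_of_ne hc]; exact h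
  have hms : ∀ b : EdgeIx d, MeasurableSet {ω : Config d | ω b = true} := fun b => by
    simpa using measurableSet_cyl {b}
  have h1 := insertion hp0 hP (0, i) measurableSet_cluZero
    (fun ω hω => cluZero_mono (hup ω _) hω) h0
  have h2 := insertion hp0 hP (0, j) (measurableSet_cluZero.inter (hms (0, i)))
    (fun ω hω => ⟨cluZero_mono (hup ω _) hω.1, hup ω _ _ hω.2⟩) h1
  rw [cond_apply measurableSet_cluZero]
  refine ENNReal.mul_pos (ENNReal.inv_ne_zero.2 (measure_ne_top _ _)) ?_
  refine (h2.trans_le (measure_mono ?_)).ne'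
  rintro ω ⟨⟨ha, hb⟩, hc⟩
  exact ⟨ha, ⟨i, Or.inl ⟨rfl, hb⟩⟩, ⟨j, Or.inl ⟨rfl, hc⟩⟩⟩

lemma not_lsc_cond (hd : 2 ≤ d) {p : ℝ} (hp0 : 0 < p) (hpc : pc d < p)
    {P : Measure (Config d)} (hP : IsBernoulli d p P) :
    ¬ LowerSemicontinuous
      (fun μ : ProbabilityMeasure (EnvSp d) => entI (P[|cluZero d]) μ) := by
  let i : Fin d := ⟨0, by omega⟩
  let j : Fin d := ⟨1, by omega⟩
  have hij : j ≠ i := by simp [i, j]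
  refine not_lsc _ (cond_restrict hP) ⟨unitVec d i, mem_Ud.2 ⟨i, Or.inl rfl⟩⟩
    ⟨unitVec d j, mem_Ud.2 ⟨j, Or.inl rfl⟩⟩ ?_ ?_ (cond_pos hd hp0 hpc hP i j)
  · intro h
    have := congrFun (congrArg Subtype.val h) j
    simp [unitVec, hij] at this
  · intro h
    have := congrFun (congrArg Subtype.val h) j
    simp [unitVec, hij, negStep] at this

end Cond

end SRWPC

open SRWPC in
/-- **The entropy functional is not lower semicontinuous** (Lemma 6.2). -/
theorem entropy_functional_not_lsc
    (d : ℕ) (hd : 2 ≤ d) (p : ℝ) (hp0 : 0 < p) (hp1 : p < 1) (hpc : pc d < p)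
    (P : Measure (Config d)) (hP : IsBernoulli d p P) :
    ¬ LowerSemicontinuous (fun μ : ProbabilityMeasure (EnvSp d) => entI (P[|cluZero d]) μ) ∧
    (fun μ : ProbabilityMeasure (EnvSp d) => ((entI (P[|cluZero d]) μ : ℝ≥0∞) : EReal)) ≠
      entIbis (P[|cluZero d]) := by
  exact ⟨not_lsc_cond hd hp0 hpc hP, fun h => not_lsc_cond hd hp0 hpc hP (lsc_of_eq _ h)⟩
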